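/- arXiv:1607.05850 — 3 statements merged into one kernel-verified Lean document; each statement's English description precedes it below -/
import Mathlib

section
/- Let Γ = ((V,E),(V₁,V₂)) be a game graph, Ω a prefix-independent objective, p ∈ {1,2} a player and op the opposing player. If X ⊆ V is p-closed in Γ, then every vertex that is winning for player op in the game on the induced game graph Γ[X] with objective Ω is also winning for player op in the game on Γ with objective Ω, i.e., W_op(Γ[X],Ω) ⊆ W_op(Γ,Ω). -/
open Classical

universe u

/-- A game graph: a directed graph `E` on vertex set `V` together with the set
`P1` of player-1 vertices; player-2 vertices are the complement of `P1`. -/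
structure GameGraph (V : Type u) where
  E : V → V → Prop
  P1 : Set V

/-- The two players. -/
inductive Player : Type where
  | one : Player
  | two : Player

/-- The opponent of a player. -/
def Player.opp : Player → Player
  | .one => .two
  | .two => .one

/-- Select the first argument for player 1 and the second for player 2. -/
def Player.sel {α : Sort*} : Player → α → α → α
  | .one, a, _ => a
  | .two, _, b => b

variable {V : Type u}

/-- The vertices belonging to a player. -/
def GameGraph.verts (Γ : GameGraph V) : Player → Set V
  | .one => Γ.P1
  | .two => Γ.P1ᶜ

/-- Every vertex has at least one outgoing edge. -/
def GameGraph.NoDead (Γ : GameGraph V) : Prop := ∀ v, ∃ w, Γ.E v w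

/-- A (general, history-dependent) strategy: given the history of the play so far
(the vertices visited strictly before the current one) and the current vertex,
choose a next vertex. -/
abbrev Strat (V : Type u) : Type u := List V → V → V

/-- A strategy is memoryless if it depends only on the current vertex. -/
def Memoryless (σ : Strat V) : Prop := ∀ h h' v, σ h v = σ h' v

/-- A strategy is valid for player `p` if at every vertex of player `p` it
chooses a successor of that vertex. -/
def GameGraph.ValidFor (Γ : GameGraph V) (p : Player) (σ : Strat V) : Prop :=
  ∀ hist v, v ∈ Γ.verts p → Γ.E v (σ hist v)

/-- One step of the play: the player-1 strategy moves at `P1`-vertices, the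
player-2 strategy elsewhere. -/
noncomputable def GameGraph.step (Γ : GameGraph V) (σ π : Strat V)
    (hist : List V) (v : V) : V :=
  if v ∈ Γ.P1 then σ hist v else π hist v

/-- The play determined by a start vertex `v`, a player-1 strategy `σ` and a
player-2 strategy `π`, together with its history. -/
noncomputable def GameGraph.playAux (Γ : GameGraph V) (σ π : Strat V) (v : V) :
    ℕ → List V × V
  | 0 => ([], v)
  | n + 1 =>
      let q := Γ.playAux σ π v n
      (q.1 ++ [q.2], Γ.step σ π q.1 q.2)

/-- The play determined by a start vertex `v`, a player-1 strategy `σ` and a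
player-2 strategy `π`. -/
noncomputable def GameGraph.play (Γ : GameGraph V) (σ π : Strat V) (v : V)
    (n : ℕ) : V :=
  (Γ.playAux σ π v n).2

/-- The play from `v` where player `p` uses strategy `σ` and the opponent uses
strategy `τ`. -/
noncomputable def GameGraph.winPlay (Γ : GameGraph V) (p : Player)
    (σ τ : Strat V) (v : V) : ℕ → V :=
  Γ.play (p.sel σ τ) (p.sel τ σ) v

/-- Player `p` wins from `v` for objective `Ω`: player 1 wants the resulting
play to lie in `Ω`, player 2 wants it to lie outside `Ω`. -/
def GameGraph.Wins (Γ : GameGraph V) (p : Player) (Ω : Set (ℕ → V)) (v : V) :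
    Prop :=
  ∃ σ, Γ.ValidFor p σ ∧ ∀ τ, Γ.ValidFor p.opp τ →
    p.sel (Γ.winPlay p σ τ v ∈ Ω) (Γ.winPlay p σ τ v ∉ Ω)

/-- A player-`p` dominion for objective `Ω`: a nonempty set from each of whose
vertices player `p` has a winning strategy that moreover keeps the play inside
the set. -/
def GameGraph.Dominion (Γ : GameGraph V) (p : Player) (Ω : Set (ℕ → V))
    (D : Set V) : Prop :=
  D.Nonempty ∧ ∀ v ∈ D, ∃ σ, Γ.ValidFor p σ ∧ ∀ τ, Γ.ValidFor p.opp τ →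
    (p.sel (Γ.winPlay p σ τ v ∈ Ω) (Γ.winPlay p σ τ v ∉ Ω)) ∧
    ∀ n, Γ.winPlay p σ τ v n ∈ D

/-- The player-`p` attractor of `U`: the least set containing `U`, every
player-`p` vertex with some successor in it, and every opponent vertex all of
whose successors are in it. -/
inductive GameGraph.Attr (Γ : GameGraph V) (p : Player) (U : Set V) : V → Prop
  | base {v} : v ∈ U → GameGraph.Attr Γ p U v
  | own {v w} : v ∈ Γ.verts p → Γ.E v w → GameGraph.Attr Γ p U w →
      GameGraph.Attr Γ p U v
  | opp {v} : v ∈ Γ.verts p.opp → (∀ w, Γ.E v w → GameGraph.Attr Γ p U w) →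
      GameGraph.Attr Γ p U v

/-- The player-`p` attractor, as a set. -/
def GameGraph.attr (Γ : GameGraph V) (p : Player) (U : Set V) : Set V :=
  {v | Γ.Attr p U v}

/-- The iterative construction `R_j` of the player-`p` attractor. -/
def GameGraph.attrIter (Γ : GameGraph V) (p : Player) (U : Set V) : ℕ → Set V
  | 0 => U
  | n + 1 =>
      Γ.attrIter p U n
        ∪ {v | v ∈ Γ.verts p ∧ ∃ w, Γ.E v w ∧ w ∈ Γ.attrIter p U n}
        ∪ {v | v ∈ Γ.verts p.opp ∧ ∀ w, Γ.E v w → w ∈ Γ.attrIter p U n}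

/-- The `p`-rank of `v` with respect to `U`: the least `j` with `v ∈ R_j`, and
`∞` if there is no such `j`. -/
noncomputable def GameGraph.rank (Γ : GameGraph V) (p : Player) (U : Set V)
    (v : V) : ℕ∞ :=
  ⨅ n ∈ {n : ℕ | v ∈ Γ.attrIter p U n}, (n : ℕ∞)

/-- A set `U` is `p`-closed: every player-`p` vertex of `U` has all its
successors in `U`, and every opponent vertex of `U` has some successor in `U`. -/
def GameGraph.PClosed (Γ : GameGraph V) (p : Player) (U : Set V) : Prop :=
  ∀ v ∈ U, (v ∈ Γ.verts p → ∀ w, Γ.E v w → w ∈ U) ∧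
    (v ∈ Γ.verts p.opp → ∃ w, Γ.E v w ∧ w ∈ U)

/-- The induced game graph on a subset `U` of the vertices. -/
def GameGraph.sub (Γ : GameGraph V) (U : Set V) : GameGraph U where
  E a b := Γ.E (a : V) (b : V)
  P1 := {a : U | (a : V) ∈ Γ.P1}

/-- The game graph with the roles of the two players exchanged. -/
def GameGraph.swap (Γ : GameGraph V) : GameGraph V where
  E := Γ.E
  P1 := Γ.P1ᶜ

/-- The set of vertices occurring infinitely often in a play. -/
def InfOcc (ω : ℕ → V) : Set V := {v | ∀ n, ∃ m, n ≤ m ∧ ω m = v}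

/-- An objective is prefix-independent if membership of a play depends only on
the set of vertices visited infinitely often. -/
def PrefixIndep (Ω : Set (ℕ → V)) : Prop :=
  ∀ ω ω', InfOcc ω = InfOcc ω' → (ω ∈ Ω ↔ ω' ∈ Ω)

/-- The Büchi objective with target set `T`. -/
def BuchiObj (T : Set V) : Set (ℕ → V) := {ω | (InfOcc ω ∩ T).Nonempty}

/-- The generalized Büchi objective with target sets `T i`. -/
def GenBuchiObj {ι : Sort*} (T : ι → Set V) : Set (ℕ → V) :=
  {ω | ∀ i, (InfOcc ω ∩ T i).Nonempty}

/-- The disjunctive co-Büchi objective with target sets `T i`. -/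
def DisjCoBuchiObj {ι : Sort*} (T : ι → Set V) : Set (ℕ → V) :=
  {ω | ∃ i, InfOcc ω ∩ T i = ∅}

/-- The GR(1) objective with assumption sets `L t` and guarantee sets `U ℓ`. -/
def GR1Obj {ι₁ ι₂ : Sort*} (L : ι₁ → Set V) (U : ι₂ → Set V) : Set (ℕ → V) :=
  {ω | (∀ t, (InfOcc ω ∩ L t).Nonempty) → ∀ ℓ, (InfOcc ω ∩ U ℓ).Nonempty}

/-- An objective on the full vertex set, restricted to plays of the induced
game graph on `U`. -/
def subObj (U : Set V) (Ω : Set (ℕ → V)) : Set (ℕ → ↥U) :=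
  {ω | (fun n => (ω n : V)) ∈ Ω}

/-- The out-degree of a vertex. -/
noncomputable def GameGraph.outDeg (Γ : GameGraph V) (v : V) : ℕ :=
  {w | Γ.E v w}.ncard

/-- A hierarchical graph decomposition of a game graph `Γ`: for every vertex
`v`, `idx v` enumerates the incoming edges of `v` (i.e., their sources) by the
positions `0, …, indeg(v) − 1`, listing edges from player-2 vertices first. -/
structure HierDecomp (Γ : GameGraph V) where
  idx : V → V → ℕ
  idx_inj : ∀ v u u', Γ.E u v → Γ.E u' v → idx v u = idx v u' → u = u'
  idx_lt : ∀ v u, Γ.E u v → idx v u < {u' | Γ.E u' v}.ncard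
  p2_first : ∀ v u u', Γ.E u v → Γ.E u' v → u ∉ Γ.P1 → u' ∈ Γ.P1 →
      idx v u < idx v u'

/-- The `i`-th level `Γ_i = (G_i, (V₁,V₂))` of the hierarchical graph
decomposition: `G_i` keeps all outgoing edges of vertices of out-degree at most
`2^i`, and the first `2^i` incoming edges of every vertex. -/
def HierDecomp.graph {Γ : GameGraph V} (H : HierDecomp Γ) (i : ℕ) :
    GameGraph V where
  E u v := Γ.E u v ∧ (Γ.outDeg u ≤ 2 ^ i ∨ H.idx v u < 2 ^ i)
  P1 := Γ.P1

/-- The exception set `Z_i`: player-2 vertices with no outgoing edge in `G_i`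
together with player-1 vertices with more than `2^i` outgoing edges in `G`. -/
def HierDecomp.Z {Γ : GameGraph V} (H : HierDecomp Γ) (i : ℕ) : Set V :=
  {v | v ∉ Γ.P1 ∧ ¬ ∃ w, (H.graph i).E v w} ∪
    {v | v ∈ Γ.P1 ∧ 2 ^ i < Γ.outDeg v}

/-- Cyclic successor `ℓ ⊕ 1` on `Fin k`. -/
def finSucc {k : ℕ} (ℓ : Fin k) : Fin k :=
  ⟨(ℓ.val + 1) % k, Nat.mod_lt _ (Nat.lt_of_le_of_lt (Nat.zero_le _) ℓ.isLt)⟩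

/-- The bound `n̄ = min (h − 1) |V ∖ T|` of the progress measure. -/
noncomputable def nbar (h : ℕ) (T : Set V) : ℕ := min (h - 1) Tᶜ.ncard

/-- The value of the best successor of `v` for the player owning `v`. -/
noncomputable def GameGraph.best (Γ : GameGraph V) {k : ℕ} (T : Fin k → Set V)
    (ρ : Fin k → V → ℕ∞) (ℓ : Fin k) (v : V) : ℕ∞ :=
  let ℓ' := if v ∈ T ℓ then finSucc ℓ else ℓ
  if v ∈ Γ.P1 then ⨅ w ∈ {w | Γ.E v w}, ρ ℓ' w
  else ⨆ w ∈ {w | Γ.E v w}, ρ ℓ' w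

/-- The increment operation `incr` of the progress measure (for the pair
`(v, ℓ)`). -/
noncomputable def pmIncr (h : ℕ) {k : ℕ} (T : Fin k → Set V) (ℓ : Fin k)
    (v : V) (x : ℕ∞) : ℕ∞ :=
  if v ∈ T ℓ ∧ x ≠ ⊤ then 0
  else if x < (nbar h (T ℓ) : ℕ∞) then x + 1 else ⊤

/-- The update operator of the progress measure: update `ρ ℓ v` to
`max (ρ ℓ v) (incr (best v))`. -/
noncomputable def GameGraph.pmStep (Γ : GameGraph V) (h : ℕ) {k : ℕ}
    (T : Fin k → Set V) (ρ : Fin k → V → ℕ∞) : Fin k → V → ℕ∞ :=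
  fun ℓ v => max (ρ ℓ v) (pmIncr h T ℓ v (Γ.best T ρ ℓ v))

/-- `ρ` is the progress measure associated with `Γ`, `T` and `h`: the least
fixed point (starting from the all-zero functions, i.e., the least one) of the
update operator. -/
def GameGraph.IsProgressMeasure (Γ : GameGraph V) (h : ℕ) {k : ℕ}
    (T : Fin k → Set V) (ρ : Fin k → V → ℕ∞) : Prop :=
  Γ.pmStep h T ρ = ρ ∧ ∀ ρ', Γ.pmStep h T ρ' = ρ' → ∀ ℓ v, ρ ℓ v ≤ ρ' ℓ v

/-- Player `p` can force, from `v`, that the play stays in `D` forever and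
visits every target set `T i` infinitely often. -/
def GameGraph.ForcesStayBuchi (Γ : GameGraph V) (p : Player) (D : Set V)
    {ι : Sort*} (T : ι → Set V) (v : V) : Prop :=
  ∃ σ, Γ.ValidFor p σ ∧ ∀ τ, Γ.ValidFor p.opp τ →
    (∀ n, Γ.winPlay p σ τ v n ∈ D) ∧
    ∀ i n, ∃ m, n ≤ m ∧ Γ.winPlay p σ τ v m ∈ T i

/-!
Player `p` cannot leave a `p`-closed set `X`, so each of its strategies in `Γ` restricts to `Γ[X]`.
If the opponent extends a winning strategy of `Γ[X]` arbitrarily outside `X`, then the play in `Γ`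
against a strategy of `p` is the play in `Γ[X]` against the restriction of that strategy.
-/

theorem Player.opp_opp (p : Player) : p.opp.opp = p := by
  cases p <;> rfl

namespace Strat

variable {X : Set V}

/-- `σ'.ExtendsOn σ A` says that the strategy `σ'` on the full vertex set makes the same moves as
the strategy `σ` on `X` at the vertices of `A`, after every history that stays in `X`. -/
def ExtendsOn (σ' : Strat V) (σ : Strat X) (A : Set V) : Prop :=
  ∀ (hist : List X) (x : X), (x : V) ∈ A → σ' (hist.map (↑)) x = σ hist x

/-- The strategy that plays `σ` at the vertices of `X` and `ρ` elsewhere. At a vertex of `X`, the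
strategy `σ` is shown the history with all vertices outside `X` removed. -/
noncomputable def extend (σ : Strat X) (ρ : Strat V) : Strat V := fun hist v =>
  if hv : v ∈ X then σ (hist.filterMap (Function.partialInv (↑))) ⟨v, hv⟩ else ρ hist v

/-- The strategy on `X` that copies the moves of `τ`. Where `τ` leaves `X`, it stays at the current
vertex, which need not be a legal move. -/
noncomputable def restrict (X : Set V) (τ : Strat V) : Strat X := fun hist x =>
  if h : τ (hist.map (↑)) x ∈ X then ⟨τ (hist.map (↑)) x, h⟩ else x

theorem extendsOn_extend (σ : Strat X) (ρ : Strat V) (A : Set V) :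
    (σ.extend ρ).ExtendsOn σ A := by
  intro hist x _
  have hcomp : Function.partialInv ((↑) : X → V) ∘ (↑) = some :=
    funext (Function.partialInv_left Subtype.val_injective)
  rw [extend, dif_pos x.2, List.filterMap_map, hcomp, List.filterMap_some]

end Strat

namespace GameGraph

variable {Γ : GameGraph V} {X : Set V} {p : Player}

theorem NoDead.exists_validFor (hΓ : Γ.NoDead) (p : Player) : ∃ ρ, Γ.ValidFor p ρ := by
  choose next hnext using hΓ
  exact ⟨fun _ => next, fun _ v _ => hnext v⟩

theorem mem_verts_or_mem_verts_opp (Γ : GameGraph V) (p : Player) (v : V) :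
    v ∈ Γ.verts p ∨ v ∈ Γ.verts p.opp := by
  cases p
  · exact Classical.em _
  · exact (Classical.em _).symm

theorem mem_verts_sub {x : X} : x ∈ (Γ.sub X).verts p ↔ (x : V) ∈ Γ.verts p := by
  cases p <;> rfl

theorem step_sel_of_mem_verts {v : V} (hv : v ∈ Γ.verts p) (σ τ : Strat V) (hist : List V) :
    Γ.step (p.sel σ τ) (p.sel τ σ) hist v = σ hist v := by
  cases p
  · exact if_pos hv
  · exact if_neg hv

theorem step_sel_of_mem_verts_opp {v : V} (hv : v ∈ Γ.verts p.opp) (σ τ : Strat V)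
    (hist : List V) : Γ.step (p.sel σ τ) (p.sel τ σ) hist v = τ hist v := by
  cases p
  · exact if_neg hv
  · exact if_pos hv

theorem ValidFor.extend {σ : Strat X} {ρ : Strat V} (hσ : (Γ.sub X).ValidFor p σ)
    (hρ : Γ.ValidFor p ρ) : Γ.ValidFor p (σ.extend ρ) := by
  intro hist v hv
  by_cases hvX : v ∈ X
  · rw [Strat.extend, dif_pos hvX]
    exact hσ _ ⟨v, hvX⟩ (mem_verts_sub.2 hv)
  · rw [Strat.extend, dif_neg hvX]
    exact hρ hist v hv

theorem ValidFor.extendsOn_restrict {τ : Strat V} (hτ : Γ.ValidFor p τ)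
    (hX : ∀ v ∈ X, v ∈ Γ.verts p → ∀ w, Γ.E v w → w ∈ X) :
    τ.ExtendsOn (τ.restrict X) (Γ.verts p) := by
  intro hist x hx
  have hmove : τ (hist.map (↑)) x ∈ X := hX x x.2 hx _ (hτ _ x hx)
  rw [Strat.restrict, dif_pos hmove]

theorem ValidFor.of_extendsOn {σ' : Strat V} {σ : Strat X} (hσ' : Γ.ValidFor p σ')
    (h : σ'.ExtendsOn σ (Γ.verts p)) : (Γ.sub X).ValidFor p σ := by
  intro hist x hx
  have hmove : Γ.E x (σ' (hist.map (↑)) x) := hσ' _ x (mem_verts_sub.1 hx)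
  rwa [h hist x (mem_verts_sub.1 hx)] at hmove

theorem playAux_eq_map_playAux_sub {σ' π' : Strat V} {σ π : Strat X}
    (hstep : ∀ (hist : List X) (x : X),
      Γ.step σ' π' (hist.map (↑)) x = (Γ.sub X).step σ π hist x) (v : X) (n : ℕ) :
    Γ.playAux σ' π' v n =
      (((Γ.sub X).playAux σ π v n).1.map (↑), ↑((Γ.sub X).playAux σ π v n).2) := by
  induction n with
  | zero => rfl
  | succ n ih => simp only [playAux, ih, hstep, List.map_append, List.map_cons, List.map_nil]

theorem winPlay_eq_coe_winPlay_sub {σ' τ' : Strat V} {σ τ : Strat X}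
    (hσ : σ'.ExtendsOn σ (Γ.verts p)) (hτ : τ'.ExtendsOn τ (Γ.verts p.opp)) (v : X) :
    Γ.winPlay p σ' τ' v = fun n => ((Γ.sub X).winPlay p σ τ v n : V) := by
  have hstep (hist : List X) (x : X) :
      Γ.step (p.sel σ' τ') (p.sel τ' σ') (hist.map (↑)) x =
        (Γ.sub X).step (p.sel σ τ) (p.sel τ σ) hist x := by
    rcases Γ.mem_verts_or_mem_verts_opp p x with hx | hx
    · rw [step_sel_of_mem_verts hx, step_sel_of_mem_verts (mem_verts_sub.2 hx), hσ hist x hx]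
    · rw [step_sel_of_mem_verts_opp hx, step_sel_of_mem_verts_opp (mem_verts_sub.2 hx),
        hτ hist x hx]
  exact funext fun n => congrArg Prod.snd (playAux_eq_map_playAux_sub hstep v n)

end GameGraph

theorem win_closed_subgame_general {V : Type u} (Γ : GameGraph V) (hΓ : Γ.NoDead)
    (Ω : Set (ℕ → V)) (p : Player) (X : Set V) (hX : Γ.PClosed p X) (v : X)
    (hv : (Γ.sub X).Wins p.opp (subObj X Ω) v) : Γ.Wins p.opp Ω (v : V) := by
  obtain ⟨σ, hσ, hwin⟩ := hv
  obtain ⟨ρ, hρ⟩ := hΓ.exists_validFor p.opp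
  refine ⟨σ.extend ρ, hσ.extend hρ, fun τ hτ => ?_⟩
  have hτX : τ.ExtendsOn (τ.restrict X) (Γ.verts p.opp.opp) :=
    hτ.extendsOn_restrict fun u hu => (p.opp_opp.symm ▸ hX u hu).1
  rw [GameGraph.winPlay_eq_coe_winPlay_sub (σ.extendsOn_extend ρ _) hτX]
  exact hwin (τ.restrict X) (hτ.of_extendsOn hτX)

/-- If `X` is `p`-closed, then every vertex winning for the
opponent `op` in the induced subgame `Γ[X]` (with the restricted prefix
independent objective) is winning for `op` in `Γ`. -/
theorem win_closed_subgame {V : Type u} [Finite V]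
    (Γ : GameGraph V) (hΓ : Γ.NoDead) (Ω : Set (ℕ → V))
    (hΩ : PrefixIndep Ω) (p : Player) (X : Set V) (hX : Γ.PClosed p X) :
    ∀ v : ↥X, (Γ.sub X).Wins p.opp (subObj X Ω) v → Γ.Wins p.opp Ω (v : V) :=
  fun v hv => win_closed_subgame_general Γ hΓ Ω p X hX v hv
end

section
/- Let Γ = ((V,E),(V₁,V₂)) be a game graph with hierarchical graph decomposition {G_i} and exception sets {Z_i}. For every i ≥ 1: if a set S ⊆ V is 1-closed in Γ and |Attr₂(Γ,S)| ≤ 2^i, then (i) the subgraphs induced by S in G_i and in G coincide (Γ_i[S] = Γ[S]), (ii) S ⊆ V ∖ Z_i, and (iii) S is 1-closed in Γ_i = (G_i,(V₁,V₂)). -/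
open Classical

universe u

variable {V : Type u}

/-!
If an edge from `u` to `v` starts at a player-2 vertex, then so do the `idx v u` edges into `v`
listed before it. When `v ∈ S`, the sources of these `idx v u + 1` edges are distinct elements of
`Attr₂(Γ, S)`, so `idx v u < |Attr₂(Γ, S)| ≤ 2 ^ i` and the edge survives in `G_i`. A player-1
vertex of the 1-closed set `S` has all its successors in `S ⊆ Attr₂(Γ, S)`, so its out-degree is at
most `2 ^ i` and all its outgoing edges survive as well.
-/

namespace GameGraph

variable {Γ Γ' : GameGraph V} {p : Player} {U : Set V} {v : V}

theorem subset_attr : U ⊆ Γ.attr p U :=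
  fun _ => Attr.base

theorem setOf_pred_subset_attr (hv : v ∈ U) : {u ∈ Γ.verts p | Γ.E u v} ⊆ Γ.attr p U :=
  fun _ hu => Attr.own hu.1 hu.2 (Attr.base hv)

theorem PClosed.outDeg_le_ncard (hcl : Γ.PClosed p U) (hU : U.Finite) (hvU : v ∈ U)
    (hvp : v ∈ Γ.verts p) : Γ.outDeg v ≤ U.ncard :=
  Set.ncard_le_ncard ((hcl v hvU).1 hvp) hU

theorem PClosed.of_subgraph (hcl : Γ.PClosed p U) (hverts : Γ'.verts = Γ.verts)
    (hle : ∀ u w, Γ'.E u w → Γ.E u w) (hE : ∀ u ∈ U, ∀ w ∈ U, Γ.E u w → Γ'.E u w) :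
    Γ'.PClosed p U := by
  intro u hu
  rw [hverts]
  refine ⟨fun hup w huw => (hcl u hu).1 hup w (hle u w huw), fun hup => ?_⟩
  obtain ⟨w, huw, hw⟩ := (hcl u hu).2 hup
  exact ⟨w, hE u hu w hw huw, hw⟩

end GameGraph

namespace HierDecomp

variable {Γ : GameGraph V} (H : HierDecomp Γ) {i : ℕ} {S : Set V} {u v : V}

theorem verts_graph : (H.graph i).verts = Γ.verts := by
  funext p
  cases p <;> rfl

theorem image_idx_setOf_pred (v : V) :
    H.idx v '' {u | Γ.E u v} = Set.Iio {u | Γ.E u v}.ncard := by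
  have hinj : Set.InjOn (H.idx v) {u | Γ.E u v} :=
    fun u hu u' hu' h => H.idx_inj v u u' hu hu' h
  refine Set.eq_of_subset_of_ncard_le ?_ ?_ (Set.finite_Iio _)
  · rintro _ ⟨u, hu, rfl⟩
    exact H.idx_lt v u hu
  · rw [hinj.ncard_image, Set.ncard_Iio_nat]

theorem idx_lt_ncard_player_two_pred (hu : u ∈ Γ.verts .two) (huv : Γ.E u v) :
    H.idx v u < {w ∈ Γ.verts .two | Γ.E w v}.ncard := by
  -- `ncard` of an infinite set is `0`, so `idx_lt` forces the in-degree of `v` to be finite.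
  have hfin : {w ∈ Γ.verts .two | Γ.E w v}.Finite :=
    (Set.finite_of_ncard_pos (Nat.zero_lt_of_lt (H.idx_lt v u huv))).subset fun _ hw => hw.2
  have hsub : Set.Iic (H.idx v u) ⊆ H.idx v '' {w ∈ Γ.verts .two | Γ.E w v} := by
    intro k hk
    obtain ⟨w, hwv, rfl⟩ : k ∈ H.idx v '' {w | Γ.E w v} := by
      rw [H.image_idx_setOf_pred]
      exact lt_of_le_of_lt hk (H.idx_lt v u huv)
    have hw : w ∈ Γ.verts .two := fun hw => (H.p2_first v u w huv hwv hu hw).not_ge hk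
    exact ⟨w, ⟨hw, hwv⟩, rfl⟩
  calc
    H.idx v u < (Set.Iic (H.idx v u)).ncard := by simp
    _ ≤ (H.idx v '' {w ∈ Γ.verts .two | Γ.E w v}).ncard := Set.ncard_le_ncard hsub (hfin.image _)
    _ ≤ {w ∈ Γ.verts .two | Γ.E w v}.ncard := Set.ncard_image_le hfin

theorem idx_lt_ncard_attr_two (hfin : (Γ.attr .two S).Finite) (hu : u ∈ Γ.verts .two)
    (hv : v ∈ S) (huv : Γ.E u v) : H.idx v u < (Γ.attr .two S).ncard :=
  (H.idx_lt_ncard_player_two_pred hu huv).trans_le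
    (Set.ncard_le_ncard (GameGraph.setOf_pred_subset_attr hv) hfin)

theorem subset_compl_Z (hcl : (H.graph i).PClosed .one S)
    (hdeg : ∀ u ∈ S, u ∈ Γ.P1 → Γ.outDeg u ≤ 2 ^ i) : S ⊆ (H.Z i)ᶜ := by
  rintro u hu (⟨hu₂, hdead⟩ | ⟨hu₁, hlt⟩)
  · obtain ⟨w, huw, -⟩ := (hcl u hu).2 hu₂
    exact hdead ⟨w, huw⟩
  · exact hlt.not_ge (hdeg u hu hu₁)

end HierDecomp

theorem hier_decomp_closed_size_general (Γ : GameGraph V) (H : HierDecomp Γ) (i : ℕ) (S : Set V)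
    (hcl : Γ.PClosed Player.one S) (hfin : (Γ.attr Player.two S).Finite)
    (hsize : (Γ.attr Player.two S).ncard ≤ 2 ^ i) :
    (∀ u ∈ S, ∀ v ∈ S, ((H.graph i).E u v ↔ Γ.E u v)) ∧
    S ⊆ (H.Z i)ᶜ ∧
    (H.graph i).PClosed Player.one S := by
  have hS : S ⊆ Γ.attr .two S := GameGraph.subset_attr
  have hdeg : ∀ u ∈ S, u ∈ Γ.P1 → Γ.outDeg u ≤ 2 ^ i := fun u hu hu₁ =>
    (hcl.outDeg_le_ncard (hfin.subset hS) hu hu₁).trans ((Set.ncard_le_ncard hS hfin).trans hsize)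
  have hE : ∀ u ∈ S, ∀ v ∈ S, Γ.E u v → (H.graph i).E u v := by
    intro u hu v hv huv
    by_cases hu₁ : u ∈ Γ.P1
    · exact ⟨huv, .inl (hdeg u hu hu₁)⟩
    · exact ⟨huv, .inr ((H.idx_lt_ncard_attr_two hfin hu₁ hv huv).trans_le hsize)⟩
  have hcl' : (H.graph i).PClosed .one S :=
    hcl.of_subgraph H.verts_graph (fun _ _ h => h.1) hE
  exact ⟨fun u hu v hv => ⟨And.left, hE u hu v hv⟩, H.subset_compl_Z hcl' hdeg, hcl'⟩

/-- If `S` is 1-closed in `Γ` and `|Attr₂(Γ,S)| ≤ 2^i`, then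
(i) the subgraphs induced by `S` in `G_i` and in `G` coincide, (ii) `S` avoids
`Z_i`, and (iii) `S` is 1-closed in `Γ_i`. -/
theorem hier_decomp_closed_size {V : Type u} [Finite V]
    (Γ : GameGraph V) (hΓ : Γ.NoDead) (H : HierDecomp Γ)
    (i : ℕ) (hi : 1 ≤ i) (S : Set V) (hcl : Γ.PClosed Player.one S)
    (hsize : (Γ.attr Player.two S).ncard ≤ 2 ^ i) :
    (∀ u ∈ S, ∀ v ∈ S, ((H.graph i).E u v ↔ Γ.E u v)) ∧
    S ⊆ (H.Z i)ᶜ ∧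
    (H.graph i).PClosed Player.one S :=
  hier_decomp_closed_size_general Γ H i S hcl (Set.toFinite _) hsize
end

section
/- Let Γ = ((V,E),(V₁,V₂)) be a game graph with GR(1) objective given by target sets L₁,…,L_{k₁} and U₁,…,U_{k₂}. Every player-1 dominion D of the swapped game graph Γ̄ with respect to the generalized Büchi objective ⋀_{t=1}^{k₁} Büchi(L_t), for which there is an index 1 ≤ ℓ ≤ k₂ with D ∩ U_ℓ = ∅, is a player-2 dominion of Γ with respect to the GR(1) objective. -/
open Classical

universe u

variable {V : Type u}

namespace GameGraph

theorem verts_swap (Γ : GameGraph V) (p : Player) : Γ.swap.verts p = Γ.verts p.opp := by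
  cases p
  · rfl
  · exact compl_compl Γ.P1

theorem validFor_swap {Γ : GameGraph V} {p : Player} {σ : Strat V} :
    Γ.swap.ValidFor p σ ↔ Γ.ValidFor p.opp σ := by
  simp only [ValidFor, verts_swap]
  rfl

theorem step_swap (Γ : GameGraph V) (σ π : Strat V) : Γ.swap.step σ π = Γ.step π σ := by
  funext hist v
  simp only [step, swap, Set.mem_compl_iff, ite_not]

theorem playAux_swap (Γ : GameGraph V) (σ π : Strat V) (v : V) :
    Γ.swap.playAux σ π v = Γ.playAux π σ v := by
  funext n
  induction n with
  | zero => rfl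
  | succ n ih => simp only [playAux, ih, step_swap]

theorem winPlay_swap (Γ : GameGraph V) (p : Player) (σ τ : Strat V) (v : V) :
    Γ.swap.winPlay p σ τ v = Γ.winPlay p.opp σ τ v := by
  funext n
  cases p <;> exact congrArg Prod.snd (congrFun (Γ.playAux_swap _ _ v) n)

theorem dominion_swap {Γ : GameGraph V} {p : Player} {Ω : Set (ℕ → V)} {D : Set V} :
    Γ.swap.Dominion p Ω D ↔ Γ.Dominion p.opp Ωᶜ D := by
  have sel_compl (ω : ℕ → V) :
      p.sel (ω ∈ Ω) (ω ∉ Ω) = p.opp.sel (ω ∈ Ωᶜ) (ω ∉ Ωᶜ) := by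
    cases p <;> simp only [Player.opp, Player.sel, Set.mem_compl_iff, not_not]
  simp only [Dominion, validFor_swap, winPlay_swap, sel_compl]

theorem Dominion.imp {Γ : GameGraph V} {p : Player} {Ω Ω' : Set (ℕ → V)} {D : Set V}
    (hD : Γ.Dominion p Ω D)
    (h : ∀ ω : ℕ → V, (∀ n, ω n ∈ D) →
      p.sel (ω ∈ Ω) (ω ∉ Ω) → p.sel (ω ∈ Ω') (ω ∉ Ω')) :
    Γ.Dominion p Ω' D := by
  refine ⟨hD.1, fun v hv => ?_⟩
  obtain ⟨σ, hσ, hwin⟩ := hD.2 v hv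
  refine ⟨σ, hσ, fun τ hτ => ?_⟩
  obtain ⟨hΩ, hstay⟩ := hwin τ hτ
  exact ⟨h _ hstay hΩ, hstay⟩

end GameGraph

theorem infOcc_subset_range (ω : ℕ → V) : InfOcc ω ⊆ Set.range ω := by
  intro v hv
  obtain ⟨m, -, hm⟩ := hv 0
  exact ⟨m, hm⟩

theorem notMem_gr1Obj_of_disjoint {ι₁ ι₂ : Sort*} {L : ι₁ → Set V} {U : ι₂ → Set V}
    {ω : ℕ → V} {ℓ : ι₂} (hω : ω ∈ GenBuchiObj L) (hU : Disjoint (InfOcc ω) (U ℓ)) :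
    ω ∉ GR1Obj L U :=
  fun hGR1 => Set.not_disjoint_iff_nonempty_inter.mpr (hGR1 hω ℓ) hU

theorem gen_buchi_dominion_is_gr1_dominion_general {Γ : GameGraph V} {ι₁ ι₂ : Sort*}
    {L : ι₁ → Set V} {U : ι₂ → Set V} {D : Set V}
    (hD : Γ.swap.Dominion Player.one (GenBuchiObj L) D)
    {ℓ : ι₂} (hdis : Disjoint D (U ℓ)) :
    Γ.Dominion Player.two (GR1Obj L U) D := by
  have hD₂ : Γ.Dominion Player.two (GenBuchiObj L)ᶜ D := GameGraph.dominion_swap.mp hD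
  refine hD₂.imp fun ω hstay hω => ?_
  have hBuchi : ω ∈ GenBuchiObj L := not_not.mp hω
  have hInf : InfOcc ω ⊆ D := (infOcc_subset_range ω).trans (Set.range_subset_iff.mpr hstay)
  exact notMem_gr1Obj_of_disjoint hBuchi (hdis.mono_left hInf)

/-- every player-1 dominion `D` of the swapped game graph `Γ̄`
with respect to the generalized Büchi objective `⋀_t Büchi(L t)` that avoids
some guarantee set `U ℓ` is a player-2 dominion of `Γ` with respect to the
GR(1) objective. -/
theorem gen_buchi_dominion_is_gr1_dominion {V : Type u} [Finite V]
    (Γ : GameGraph V) (hΓ : Γ.NoDead) {k₁ k₂ : ℕ}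
    (L : Fin k₁ → Set V) (U : Fin k₂ → Set V) (D : Set V)
    (hD : Γ.swap.Dominion Player.one (GenBuchiObj L) D)
    (ℓ : Fin k₂) (hdis : D ∩ U ℓ = ∅) :
    Γ.Dominion Player.two (GR1Obj L U) D :=
  gen_buchi_dominion_is_gr1_dominion_general hD (Set.disjoint_iff_inter_eq_empty.mpr hdis)
end
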